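/- Let n ≥ 3 and let Y_n be a minimizer of the quantization energy among subsets of Q with n points. Then for every y ∈ Y_n, the Voronoi cell V of y satisfies diam(V) ≤ Γ₄·(n−2)^{−1/3}, where Γ₄ := (2·12^{1/4}·16^{1/3}/(π^{1/4}·ω₃^{1/12}))·(√(1 + 2⁴·3³/(5²·10³)) − 1)^{−1/2}·(5²·10³/(2²·3³))^{1/4}. -/

import Mathlib

open MeasureTheory

noncomputable section

/-- Euclidean 3-space. -/
abbrev E3 := EuclideanSpace ℝ (Fin 3)

/-- The closed unit cube Q = [0,1]³. -/
def Qcube : Set E3 := {x | ∀ i, x i ∈ Set.Icc (0 : ℝ) 1}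

/-- The quantization energy E(Y) = ∫_Q dist(x,Y)² dx. -/
def quantE (Y : Finset E3) : ℝ := ∫ x in Qcube, (Metric.infDist x (↑Y : Set E3)) ^ 2

/-- The Voronoi cell of a generator y ∈ Y, relative to Q. -/
def vorCell (Y : Finset E3) (y : E3) : Set E3 :=
  {x ∈ Qcube | ∀ z ∈ Y, dist x y ≤ dist x z}

/-- Y is a minimizer of the quantization energy among n-point subsets of Q. -/
def IsMinimizer (n : ℕ) (Y : Finset E3) : Prop :=
  (↑Y : Set E3) ⊆ Qcube ∧ Y.card = n ∧
    ∀ Z : Finset E3, (↑Z : Set E3) ⊆ Qcube → Z.card = n → quantE Y ≤ quantE Z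

/-- ω₃ = 4π/3, the volume of the unit ball in ℝ³. -/
def omega3 : ℝ := 4 * Real.pi / 3

/-- Γ₁ = (2/5)^{2/3} / 40. -/
def Gamma1 : ℝ := ((2 / 5 : ℝ) ^ ((2 : ℝ) / 3)) / 40

/-- Γ₃ = ω₃^{-1/5} Γ₁^{1/5}. -/
def Gamma3 : ℝ := omega3 ^ (-(1 : ℝ) / 5) * Gamma1 ^ ((1 : ℝ) / 5)

/-- Γ₅ = (1/4)(√(1 + 2⁴·3³/(5²·10³)) − 1) Γ₃. -/
def Gamma5 : ℝ :=
  (1 / 4) * (Real.sqrt (1 + (2 ^ 4 * 3 ^ 3 : ℝ) / (5 ^ 2 * 10 ^ 3)) - 1) * Gamma3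

/-- Γ₄, the diameter upper-bound constant. -/
def Gamma4 : ℝ :=
  (2 * (12 : ℝ) ^ ((1 : ℝ) / 4) * (16 : ℝ) ^ ((1 : ℝ) / 3) /
      (Real.pi ^ ((1 : ℝ) / 4) * omega3 ^ ((1 : ℝ) / 12))) *
    (Real.sqrt (1 + (2 ^ 4 * 3 ^ 3 : ℝ) / (5 ^ 2 * 10 ^ 3)) - 1) ^ (-(1 : ℝ) / 2) *
    ((5 ^ 2 * 10 ^ 3 : ℝ) / (2 ^ 2 * 3 ^ 3)) ^ ((1 : ℝ) / 4)

/-!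
A minimizer with `n` points in dimension `d` gains nothing by moving one of its points. Cut the cube
into `k ^ d` cells of diameter at most `δ = √d / k`, with `k` maximal such that `2 * k ^ d ≤ n`. At
least `k ^ d` points share their cell with another point of `Y`, and any `x` is affected by the
deletion of one point only, so some point can be deleted at a cost of at most `3 * δ ^ 2 / k ^ d`.
If `x` is at distance `r` from `Y`, reinserting the deleted point at `x` gains at least
`r ^ 2 / 2` times the volume of the part of the cube within `r / 4` of `x`, which is of order
`r ^ (d + 2)`. Comparing the two gives `r ≤ 4 * √d / k`, and a Voronoi cell has
diameter at most twice the largest such `r`.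
-/

open Metric Finset

section FiniteSets

variable {X κ : Type*}

theorem card_le_card_add_card_filter_exists_ne [DecidableEq X] [Fintype κ] [DecidableEq κ]
    (c : X → κ) (Y : Finset X) :
    #Y ≤ Fintype.card κ + #{y ∈ Y | ∃ z ∈ Y, z ≠ y ∧ c z = c y} := by
  rw [← card_filter_add_card_filter_not (s := Y) (fun y ↦ ∃ z ∈ Y, z ≠ y ∧ c z = c y), add_comm]
  gcongr
  refine card_le_card_of_injOn c (fun _ _ ↦ mem_univ _) fun a ha b hb hab ↦ ?_
  by_contra hne
  exact (mem_filter.1 hb).2 ⟨a, (mem_filter.1 ha).1, hne, hab⟩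

variable [PseudoMetricSpace X]

theorem exists_finset_subset_card_le_forall_exists_dist_le [Fintype κ] {K : Set X} {c : X → κ}
    {δ : ℝ} (hc : ∀ x ∈ K, ∀ y ∈ K, c x = c y → dist x y ≤ δ) :
    ∃ G : Finset X, (G : Set X) ⊆ K ∧ #G ≤ Fintype.card κ ∧ ∀ x ∈ K, ∃ z ∈ G, dist x z ≤ δ := by
  obtain ⟨s, hsK, hs⟩ := Set.exists_subset_bijOn K c
  have hfin : s.Finite := .of_injOn hs.mapsTo hs.injOn (Set.toFinite _)
  refine ⟨hfin.toFinset, by simpa using hsK,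
    card_le_card_of_injOn c (fun _ _ ↦ mem_univ _) (by simpa using hs.injOn), fun x hx ↦ ?_⟩
  obtain ⟨z, hz, hzx⟩ := hs.surjOn (Set.mem_image_of_mem c hx)
  exact ⟨z, by simpa using hz, hc x hx z (hsK hz) hzx.symm⟩

theorem infDist_erase_le_infDist_add_dist [DecidableEq X] {Y : Finset X} {x w z : X}
    (hw : infDist x Y = dist x w) (hz : z ∈ Y) (hzw : z ≠ w) :
    infDist x (Y.erase w) ≤ infDist x Y + dist z w := by
  rw [hw, dist_comm z w]
  exact (infDist_le_dist_of_mem (mem_coe.2 (mem_erase.2 ⟨hzw, hz⟩))).trans (dist_triangle x w z)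

theorem sum_infDist_erase_sq_sub_le [DecidableEq X] {Y S : Finset X} {δ : ℝ} (hY : Y.Nonempty)
    (hS : ∀ y ∈ S, ∃ z ∈ Y, z ≠ y ∧ dist z y ≤ δ) (x : X) :
    ∑ y ∈ S, (infDist x (Y.erase y) ^ 2 - infDist x Y ^ 2) ≤ infDist x Y ^ 2 + 2 * δ ^ 2 := by
  obtain ⟨w, hwY, hw⟩ := Y.finite_toSet.isCompact.exists_infDist_eq_dist (coe_nonempty.2 hY) x
  -- Only the deletion of the nearest point `w` changes the distance from `x`.
  have hterm : ∀ y ∈ S, infDist x (Y.erase y) ^ 2 - infDist x Y ^ 2 ≤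
      if y = w then infDist x Y ^ 2 + 2 * δ ^ 2 else 0 := by
    intro y hy
    split_ifs with hyw
    · subst hyw
      obtain ⟨z, hzY, hzy, hzδ⟩ := hS y hy
      have hle : infDist x (Y.erase y) ≤ infDist x Y + δ :=
        (infDist_erase_le_infDist_add_dist hw hzY hzy).trans (by gcongr)
      have hsq := pow_le_pow_left₀ infDist_nonneg hle 2
      linarith [sq_nonneg (infDist x Y - δ)]
    · have hle : infDist x (Y.erase y) ≤ infDist x Y :=
        hw ▸ infDist_le_dist_of_mem (mem_coe.2 (mem_erase.2 ⟨Ne.symm hyw, hwY⟩))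
      exact sub_nonpos.2 (pow_le_pow_left₀ infDist_nonneg hle 2)
  refine (sum_le_sum hterm).trans ?_
  rw [sum_ite_eq']
  split_ifs
  · rfl
  · positivity

/-- The Voronoi cell, inside `K`, of the point `y` of `Y`. -/
def voronoiCell (K : Set X) (Y : Finset X) (y : X) : Set X :=
  {x ∈ K | ∀ z ∈ Y, dist x y ≤ dist x z}

theorem diam_voronoiCell_le {K : Set X} {Y : Finset X} {y : X} {R : ℝ} (hR : 0 ≤ R)
    (hKY : ∀ x ∈ K, infDist x Y ≤ R) (hy : y ∈ Y) : diam (voronoiCell K Y y) ≤ 2 * R := by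
  have hdist : ∀ x ∈ voronoiCell K Y y, dist x y ≤ R := fun x hx ↦
    ((le_infDist ⟨y, hy⟩).2 fun z hz ↦ hx.2 z hz).trans (hKY x hx.1)
  refine diam_le_of_forall_dist_le (by positivity) fun a ha b hb ↦ ?_
  linarith [dist_triangle_right a b y, hdist a ha, hdist b hb]

end FiniteSets

section Energy

variable {X κ : Type*} [MetricSpace X] [MeasurableSpace X]

/-- The mean squared distance functional `∫ x in K, dist (x, Y) ^ 2 ∂μ` of a finite set `Y`. For the
empty set it is `0`, since `infDist x ∅ = 0`. -/
def quantizationEnergy (μ : Measure X) (K : Set X) (Y : Finset X) : ℝ :=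
  ∫ x in K, infDist x Y ^ 2 ∂μ

/-- A finite subset `Y` of `K` is an optimal quantizer if no subset of `K` with the same number of
points has smaller quantization energy. -/
structure IsOptimalQuantizer (μ : Measure X) (K : Set X) (Y : Finset X) : Prop where
  subset : (Y : Set X) ⊆ K
  energy_le : ∀ Z : Finset X, (Z : Set X) ⊆ K → #Z = #Y →
    quantizationEnergy μ K Y ≤ quantizationEnergy μ K Z

variable {μ : Measure X} {K : Set X} {Y Z S : Finset X}

theorem IsOptimalQuantizer.quantizationEnergy_le_insert_erase [DecidableEq X]
    (hY : IsOptimalQuantizer μ K Y) {x y : X} (hx : x ∈ K) (hxY : x ∉ Y) (hy : y ∈ Y) :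
    quantizationEnergy μ K Y ≤ quantizationEnergy μ K (insert x (Y.erase y)) := by
  refine hY.energy_le _ ?_ ?_
  · rw [coe_insert, Set.insert_subset_iff]
    exact ⟨hx, (coe_subset.2 (erase_subset y Y)).trans hY.subset⟩
  · rw [card_insert_of_notMem (mt mem_of_mem_erase hxY), card_erase_add_one hy]

variable [IsFiniteMeasureOnCompacts μ]

theorem quantizationEnergy_le_of_infDist_le (hK : IsCompact K) {δ : ℝ}
    (hY : ∀ x ∈ K, infDist x Y ≤ δ) : quantizationEnergy μ K Y ≤ δ ^ 2 * μ.real K := by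
  refine (Real.le_norm_self _).trans
    (norm_setIntegral_le_of_norm_le_const hK.measure_lt_top fun x hx ↦ ?_)
  rw [Real.norm_of_nonneg (sq_nonneg _)]
  exact pow_le_pow_left₀ infDist_nonneg (hY x hx) 2

variable [OpensMeasurableSpace X]

theorem integrableOn_infDist_sq (hK : IsCompact K) (Y : Finset X) :
    IntegrableOn (fun x ↦ infDist x Y ^ 2) K μ :=
  ((continuous_infDist_pt _).pow 2).continuousOn.integrableOn_compact hK

theorem quantizationEnergy_anti (hK : IsCompact K) (hZ : Z.Nonempty) (hZY : Z ⊆ Y) :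
    quantizationEnergy μ K Y ≤ quantizationEnergy μ K Z := by
  refine setIntegral_mono (integrableOn_infDist_sq hK Y) (integrableOn_infDist_sq hK Z) fun x ↦ ?_
  exact pow_le_pow_left₀ infDist_nonneg
    (infDist_le_infDist_of_subset (coe_subset.2 hZY) (coe_nonempty.2 hZ)) 2

theorem sum_quantizationEnergy_erase_sub_le [DecidableEq X] (hK : IsCompact K) (hY : Y.Nonempty)
    {δ : ℝ} (hS : ∀ y ∈ S, ∃ z ∈ Y, z ≠ y ∧ dist z y ≤ δ) :
    ∑ y ∈ S, (quantizationEnergy μ K (Y.erase y) - quantizationEnergy μ K Y) ≤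
      quantizationEnergy μ K Y + 2 * δ ^ 2 * μ.real K := by
  have hint (Z : Finset X) := integrableOn_infDist_sq (μ := μ) hK Z
  have hsub (y : X) : IntegrableOn (fun x ↦ infDist x (Y.erase y) ^ 2 - infDist x Y ^ 2) K μ :=
    (hint _).sub (hint _)
  have hconst : IntegrableOn (fun _ ↦ 2 * δ ^ 2) K μ := integrableOn_const hK.measure_lt_top.ne
  calc ∑ y ∈ S, (quantizationEnergy μ K (Y.erase y) - quantizationEnergy μ K Y)
      = ∫ x in K, ∑ y ∈ S, (infDist x (Y.erase y) ^ 2 - infDist x Y ^ 2) ∂μ := by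
        rw [integral_finsetSum _ fun y _ ↦ hsub y]
        exact sum_congr rfl fun y _ ↦ (integral_sub (hint _) (hint _)).symm
    _ ≤ ∫ x in K, (infDist x Y ^ 2 + 2 * δ ^ 2) ∂μ :=
        setIntegral_mono (integrable_finsetSum _ fun y _ ↦ hsub y)
          ((hint Y).add hconst) (sum_infDist_erase_sq_sub_le hY hS)
    _ = quantizationEnergy μ K Y + 2 * δ ^ 2 * μ.real K := by
        rw [integral_add (hint Y) hconst, setIntegral_const, smul_eq_mul, mul_comm (μ.real K)]
        rfl

theorem half_sq_mul_measureReal_le_quantizationEnergy_sub_insert [DecidableEq X]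
    (hK : IsCompact K) (hY : Y.Nonempty) {x : X} {r : ℝ} (hr : 0 ≤ r) (hrx : r ≤ infDist x Y) :
    r ^ 2 / 2 * μ.real (K ∩ closedBall x (r / 4)) ≤
      quantizationEnergy μ K Y - quantizationEnergy μ K (insert x Y) := by
  have hsub : K ∩ closedBall x (r / 4) ⊆ K := Set.inter_subset_left
  have hint : IntegrableOn (fun z ↦ infDist z Y ^ 2 - infDist z ↑(insert x Y) ^ 2) K μ :=
    (integrableOn_infDist_sq hK _).sub (integrableOn_infDist_sq hK _)
  have hinsert (z : X) : infDist z ↑(insert x Y) ≤ infDist z Y :=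
    infDist_le_infDist_of_subset (coe_subset.2 (subset_insert x Y)) (coe_nonempty.2 hY)
  have hnear : ∀ z ∈ K ∩ closedBall x (r / 4),
      r ^ 2 / 2 ≤ infDist z Y ^ 2 - infDist z ↑(insert x Y) ^ 2 := by
    rintro z ⟨-, hz : dist z x ≤ r / 4⟩
    have hnew : infDist z ↑(insert x Y) ≤ r / 4 :=
      (infDist_le_dist_of_mem (mem_coe.2 (mem_insert_self x Y))).trans hz
    have hold : 3 * r / 4 ≤ infDist z Y := by
      linarith [infDist_le_infDist_add_dist (s := (Y : Set X)) (x := x) (y := z), dist_comm x z]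
    linarith [pow_le_pow_left₀ infDist_nonneg hnew 2, pow_le_pow_left₀ (by positivity) hold 2]
  calc r ^ 2 / 2 * μ.real (K ∩ closedBall x (r / 4))
      ≤ ∫ z in K ∩ closedBall x (r / 4), (infDist z Y ^ 2 - infDist z ↑(insert x Y) ^ 2) ∂μ :=
        setIntegral_ge_of_const_le_real (hK.measurableSet.inter measurableSet_closedBall)
          (measure_ne_top_of_subset hsub hK.measure_lt_top.ne) hnear (hint.mono_set hsub)
    _ ≤ ∫ z in K, (infDist z Y ^ 2 - infDist z ↑(insert x Y) ^ 2) ∂μ :=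
        setIntegral_mono_set hint
          (.of_forall fun z ↦ sub_nonneg.2 (pow_le_pow_left₀ infDist_nonneg (hinsert z) 2))
          hsub.eventuallyLE
    _ = quantizationEnergy μ K Y - quantizationEnergy μ K (insert x Y) :=
        integral_sub (integrableOn_infDist_sq hK _) (integrableOn_infDist_sq hK _)

namespace IsOptimalQuantizer

theorem quantizationEnergy_le_of_card_le (hY : IsOptimalQuantizer μ K Y) (hK : IsCompact K)
    {G : Finset X} (hGne : G.Nonempty) (hG : (G : Set X) ⊆ K) (hcard : #G ≤ #Y) :
    quantizationEnergy μ K Y ≤ quantizationEnergy μ K G := by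
  classical
  obtain ⟨Z, hGZ, hZ, hZcard⟩ := exists_subsuperset_card_eq (subset_union_left (s₂ := Y)) hcard
    (card_le_card subset_union_right)
  have hZK : (Z : Set X) ⊆ K :=
    (coe_subset.2 hZ).trans (by simpa using ⟨hG, hY.subset⟩)
  exact (hY.energy_le Z hZK hZcard).trans (quantizationEnergy_anti hK hGne hGZ)

variable [Fintype κ] [Nonempty κ] {c : X → κ} {δ : ℝ}

theorem quantizationEnergy_le_sq_mul_measureReal (hY : IsOptimalQuantizer μ K Y) (hK : IsCompact K)
    (hc : ∀ x ∈ K, ∀ y ∈ K, c x = c y → dist x y ≤ δ) (hcard : Fintype.card κ ≤ #Y) :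
    quantizationEnergy μ K Y ≤ δ ^ 2 * μ.real K := by
  obtain ⟨G, hGK, hGcard, hG⟩ := exists_finset_subset_card_le_forall_exists_dist_le hc
  obtain ⟨y, hy⟩ : Y.Nonempty := card_pos.1 (Fintype.card_pos.trans_le hcard)
  obtain ⟨z, hz, -⟩ := hG y (hY.subset hy)
  refine (hY.quantizationEnergy_le_of_card_le hK ⟨z, hz⟩ hGK (hGcard.trans hcard)).trans
    (quantizationEnergy_le_of_infDist_le hK fun x hx ↦ ?_)
  obtain ⟨w, hw, hxw⟩ := hG x hx
  exact (infDist_le_dist_of_mem hw).trans hxw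

theorem exists_card_mul_quantizationEnergy_erase_sub_le [DecidableEq X]
    (hY : IsOptimalQuantizer μ K Y) (hK : IsCompact K)
    (hc : ∀ x ∈ K, ∀ y ∈ K, c x = c y → dist x y ≤ δ) (hcard : 2 * Fintype.card κ ≤ #Y) :
    ∃ y ∈ Y, Fintype.card κ * (quantizationEnergy μ K (Y.erase y) - quantizationEnergy μ K Y) ≤
      3 * δ ^ 2 * μ.real K := by
  classical
  have hκ : 0 < Fintype.card κ := Fintype.card_pos
  set S : Finset X := {y ∈ Y | ∃ z ∈ Y, z ≠ y ∧ c z = c y}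
  set cost : X → ℝ := fun y ↦ quantizationEnergy μ K (Y.erase y) - quantizationEnergy μ K Y
  have hSY : S ⊆ Y := filter_subset _ _
  have hScard : Fintype.card κ ≤ #S := by
    have := card_le_card_add_card_filter_exists_ne c Y
    lia
  have hSclose : ∀ y ∈ S, ∃ z ∈ Y, z ≠ y ∧ dist z y ≤ δ := by
    intro y hy
    obtain ⟨hyY, z, hzY, hzy, hczy⟩ := mem_filter.1 hy
    exact ⟨z, hzY, hzy, hc z (hY.subset hzY) y (hY.subset hyY) hczy⟩
  obtain ⟨y, hyS, hymin⟩ := S.exists_min_image cost (card_pos.1 (hκ.trans_le hScard))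
  have hcost : 0 ≤ cost y := by
    have herase : (Y.erase y).Nonempty := by
      rw [← card_pos, card_erase_of_mem (hSY hyS)]
      lia
    exact sub_nonneg.2 (quantizationEnergy_anti hK herase (erase_subset y Y))
  refine ⟨y, hSY hyS, ?_⟩
  calc Fintype.card κ * cost y ≤ #S * cost y := by gcongr
    _ ≤ ∑ z ∈ S, cost z := by simpa using card_nsmul_le_sum S cost (cost y) hymin
    _ ≤ quantizationEnergy μ K Y + 2 * δ ^ 2 * μ.real K :=
        sum_quantizationEnergy_erase_sub_le hK ⟨y, hSY hyS⟩ hSclose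
    _ ≤ 3 * δ ^ 2 * μ.real K := by
        linarith [hY.quantizationEnergy_le_sq_mul_measureReal hK hc (by lia)]

theorem card_mul_infDist_sq_mul_measureReal_le (hY : IsOptimalQuantizer μ K Y) (hK : IsCompact K)
    (hc : ∀ x ∈ K, ∀ y ∈ K, c x = c y → dist x y ≤ δ) (hcard : 2 * Fintype.card κ ≤ #Y)
    {x : X} (hx : x ∈ K) :
    Fintype.card κ * (infDist x Y ^ 2 / 2 * μ.real (K ∩ closedBall x (infDist x Y / 4))) ≤
      3 * δ ^ 2 * μ.real K := by
  classical
  by_cases hxY : x ∈ Y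
  · rw [infDist_zero_of_mem (mem_coe.2 hxY)]
    simp only [ne_eq, OfNat.ofNat_ne_zero, not_false_eq_true, zero_pow, zero_div, zero_mul,
      mul_zero]
    positivity
  obtain ⟨y, hy, hcost⟩ := hY.exists_card_mul_quantizationEnergy_erase_sub_le hK hc hcard
  have herase : (Y.erase y).Nonempty := by
    have hκ : 0 < Fintype.card κ := Fintype.card_pos
    rw [← card_pos, card_erase_of_mem hy]
    lia
  have hgain := half_sq_mul_measureReal_le_quantizationEnergy_sub_insert (μ := μ) hK herase
    infDist_nonneg (infDist_le_infDist_of_subset (x := x) (coe_subset.2 (erase_subset y Y))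
      (coe_nonempty.2 herase))
  refine le_trans ?_ hcost
  gcongr
  linarith [hY.quantizationEnergy_le_insert_erase hx hxY hy]

end IsOptimalQuantizer

end Energy

section ConvexBody

variable {E κ : Type*} [NormedAddCommGroup E] [NormedSpace ℝ E] [FiniteDimensional ℝ E]
  [MeasurableSpace E] [BorelSpace E] {μ : Measure E} [μ.IsAddHaarMeasure] {K : Set E} {D : ℝ}

theorem pow_finrank_mul_measureReal_le_of_convex (hK : IsCompact K) (hconv : Convex ℝ K)
    {x : E} (hx : x ∈ K) (hD : ∀ y ∈ K, dist x y ≤ D) {s : ℝ} (hs : s ∈ Set.Icc 0 1) :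
    s ^ Module.finrank ℝ E * μ.real K ≤ μ.real (K ∩ closedBall x (s * D)) := by
  -- By convexity the homothety of ratio `s` centred at `x` maps `K` into itself.
  have hsub : AffineMap.homothety x s '' K ⊆ K ∩ closedBall x (s * D) := by
    rintro _ ⟨y, hy, rfl⟩
    refine ⟨hconv.lineMap_mem hx hy hs, ?_⟩
    rw [mem_closedBall, dist_homothety_center, Real.norm_of_nonneg hs.1]
    exact mul_le_mul_of_nonneg_left (hD y hy) hs.1
  calc s ^ Module.finrank ℝ E * μ.real K = μ.real (AffineMap.homothety x s '' K) := by
        rw [measureReal_def, measureReal_def, Measure.addHaar_image_homothety, ENNReal.toReal_mul,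
          ENNReal.toReal_ofReal (abs_nonneg _), abs_of_nonneg (pow_nonneg hs.1 _)]
    _ ≤ μ.real (K ∩ closedBall x (s * D)) :=
        measureReal_mono hsub
          (measure_ne_top_of_subset Set.inter_subset_left hK.measure_lt_top.ne)

namespace IsOptimalQuantizer

variable {Y : Finset E} [Fintype κ] [Nonempty κ] {c : E → κ} {δ : ℝ}

theorem card_mul_infDist_pow_le_of_convex (hY : IsOptimalQuantizer μ K Y) (hK : IsCompact K)
    (hconv : Convex ℝ K) (hμK : μ K ≠ 0) (hD0 : 0 < D) (hD : ∀ x ∈ K, ∀ y ∈ K, dist x y ≤ D)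
    (hc : ∀ x ∈ K, ∀ y ∈ K, c x = c y → dist x y ≤ δ) (hcard : 2 * Fintype.card κ ≤ #Y)
    {x : E} (hx : x ∈ K) :
    Fintype.card κ * infDist x Y ^ (Module.finrank ℝ E + 2) ≤
      6 * δ ^ 2 * (4 * D) ^ Module.finrank ℝ E := by
  set d := Module.finrank ℝ E
  set r := infDist x Y
  have hμ : 0 < μ.real K := ENNReal.toReal_pos hμK hK.measure_lt_top.ne
  have hrD : r ≤ D := by
    obtain ⟨y, hy⟩ : Y.Nonempty := by
      have hκ : 0 < Fintype.card κ := Fintype.card_pos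
      rw [← card_pos]
      lia
    exact (infDist_le_dist_of_mem hy).trans (hD x hx y (hY.subset hy))
  have hr0 : 0 ≤ r := infDist_nonneg
  have hs : r / (4 * D) ∈ Set.Icc (0 : ℝ) 1 :=
    ⟨by positivity, (div_le_one (by positivity)).2 (by linarith)⟩
  have hball : (r / (4 * D)) ^ d * μ.real K ≤ μ.real (K ∩ closedBall x (r / 4)) := by
    convert pow_finrank_mul_measureReal_le_of_convex (μ := μ) hK hconv hx (hD x hx) hs using 4
    field_simp
  have hmul : Fintype.card κ * (r ^ 2 / 2 * (r / (4 * D)) ^ d) * μ.real K ≤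
      3 * δ ^ 2 * μ.real K := by
    refine le_trans ?_ (hY.card_mul_infDist_sq_mul_measureReal_le hK hc hcard hx)
    rw [mul_assoc, mul_assoc]
    gcongr
  have hle := le_of_mul_le_mul_right hmul hμ
  calc Fintype.card κ * r ^ (d + 2)
      = 2 * (4 * D) ^ d * (Fintype.card κ * (r ^ 2 / 2 * (r / (4 * D)) ^ d)) := by
        rw [div_pow, pow_add]
        field_simp
    _ ≤ 2 * (4 * D) ^ d * (3 * δ ^ 2) := by gcongr
    _ = 6 * δ ^ 2 * (4 * D) ^ d := by ring

theorem infDist_le_of_convex (hY : IsOptimalQuantizer μ K Y) (hK : IsCompact K)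
    (hconv : Convex ℝ K) (hμK : μ K ≠ 0) (hD0 : 0 < D) (hD : ∀ x ∈ K, ∀ y ∈ K, dist x y ≤ D)
    {k : ℕ} (hk : 0 < k) (hκ : Fintype.card κ = k ^ Module.finrank ℝ E)
    (hc : ∀ x ∈ K, ∀ y ∈ K, c x = c y → dist x y ≤ D / k)
    (hcard : 2 * k ^ Module.finrank ℝ E ≤ #Y) {x : E} (hx : x ∈ K) :
    infDist x Y ≤ 4 * D / k := by
  have hk' : (0 : ℝ) < k := Nat.cast_pos.2 hk
  have hle := hY.card_mul_infDist_pow_le_of_convex hK hconv hμK hD0 hD hc (hκ ▸ hcard) hx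
  rw [hκ, Nat.cast_pow] at hle
  set d := Module.finrank ℝ E
  set r := infDist x Y
  rw [le_div_iff₀ hk']
  refine le_of_pow_le_pow_left₀ (n := d + 2) (by lia) (by positivity) ?_
  calc (r * k) ^ (d + 2) = k ^ 2 * (k ^ d * r ^ (d + 2)) := by ring
    _ ≤ k ^ 2 * (6 * (D / k) ^ 2 * (4 * D) ^ d) := by gcongr
    _ = 6 * D ^ 2 * (4 * D) ^ d := by field_simp
    _ ≤ 16 * D ^ 2 * (4 * D) ^ d := by gcongr; norm_num
    _ = (4 * D) ^ (d + 2) := by ring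

end IsOptimalQuantizer

end ConvexBody

section UnitCube

variable {ι : Type*}

/-- The cube `[0, 1] ^ ι` in Euclidean space. -/
def unitCube (ι : Type*) : Set (EuclideanSpace ℝ ι) := {x | ∀ i, x i ∈ Set.Icc (0 : ℝ) 1}

theorem unitCube_eq_preimage_Icc : unitCube ι = WithLp.ofLp ⁻¹' Set.Icc (0 : ι → ℝ) 1 := by
  ext x
  simp only [unitCube, Set.mem_ofPred_eq, Set.mem_preimage, Set.mem_Icc, Pi.le_def, Pi.zero_apply,
    Pi.one_apply, forall_and]

theorem isCompact_unitCube : IsCompact (unitCube ι) := by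
  rw [unitCube_eq_preimage_Icc]
  exact (PiLp.homeomorph 2 fun _ : ι ↦ ℝ).isClosedEmbedding.isCompact_preimage isCompact_Icc

theorem convex_unitCube : Convex ℝ (unitCube ι) := fun _ hx _ hy _ _ ha hb hab i ↦
  convex_Icc (0 : ℝ) 1 (hx i) (hy i) ha hb hab

variable [Fintype ι]

theorem volume_unitCube : volume (unitCube ι) = 1 := by
  rw [unitCube_eq_preimage_Icc, (PiLp.volume_preserving_ofLp ι).measure_preimage
    measurableSet_Icc.nullMeasurableSet, Real.volume_Icc_pi]
  simp

theorem dist_le_sqrt_card_mul_of_forall_abs_sub_le {x y : EuclideanSpace ℝ ι} {a : ℝ} (ha : 0 ≤ a)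
    (h : ∀ i, |x i - y i| ≤ a) : dist x y ≤ √(Fintype.card ι) * a := by
  rw [EuclideanSpace.dist_eq, ← Real.sqrt_sq ha, ← Real.sqrt_mul (Nat.cast_nonneg _)]
  refine Real.sqrt_le_sqrt ?_
  simpa using sum_le_card_nsmul univ (fun i ↦ dist (x i) (y i) ^ 2) (a ^ 2)
    fun i _ ↦ pow_le_pow_left₀ dist_nonneg (h i) 2

theorem dist_le_sqrt_card_of_mem_unitCube {x y : EuclideanSpace ℝ ι} (hx : x ∈ unitCube ι)
    (hy : y ∈ unitCube ι) : dist x y ≤ √(Fintype.card ι) := by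
  have h (i : ι) : |x i - y i| ≤ 1 := by
    simpa using abs_sub_le_of_le_of_le (hx i).1 (hx i).2 (hy i).1 (hy i).2
  simpa using dist_le_sqrt_card_mul_of_forall_abs_sub_le zero_le_one h

/-- The index of the grid cell `[j / k, (j + 1) / k]` of `[0, 1]` that contains `t`; the minimum
puts the endpoint `t = 1` into the last cell. -/
def gridIndex (k : ℕ) [NeZero k] (t : ℝ) : Fin k :=
  ⟨min ⌊k * t⌋₊ (k - 1), by have := NeZero.pos k; lia⟩

theorem mul_mem_Icc_gridIndex (k : ℕ) [NeZero k] {t : ℝ} (ht : t ∈ Set.Icc (0 : ℝ) 1) :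
    k * t ∈ Set.Icc (gridIndex k t : ℝ) (gridIndex k t + 1) := by
  have hk : 1 ≤ k := NeZero.one_le
  have hfloor : (⌊k * t⌋₊ : ℝ) ≤ k * t := Nat.floor_le (mul_nonneg k.cast_nonneg ht.1)
  have hkt : k * t ≤ k := mul_le_of_le_one_right k.cast_nonneg ht.2
  simp only [gridIndex, Nat.cast_min, Nat.cast_sub hk, Nat.cast_one]
  refine ⟨(min_le_left _ _).trans hfloor, ?_⟩
  rw [← min_add_add_right, sub_add_cancel]
  exact le_min (Nat.lt_floor_add_one _).le hkt

theorem abs_sub_le_of_gridIndex_eq {k : ℕ} [NeZero k] {s t : ℝ} (hs : s ∈ Set.Icc (0 : ℝ) 1)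
    (ht : t ∈ Set.Icc (0 : ℝ) 1) (hst : gridIndex k s = gridIndex k t) : |s - t| ≤ 1 / k := by
  have hk : (0 : ℝ) < k := Nat.cast_pos.2 (NeZero.pos k)
  have hs' := mul_mem_Icc_gridIndex k hs
  have ht' := mul_mem_Icc_gridIndex k ht
  rw [hst] at hs'
  have h : |k * s - k * t| ≤ 1 := by
    simpa using abs_sub_le_of_le_of_le hs'.1 hs'.2 ht'.1 ht'.2
  rwa [← mul_sub, abs_mul, abs_of_pos hk, mul_comm, ← le_div_iff₀ hk] at h

theorem dist_le_of_forall_gridIndex_eq {k : ℕ} [NeZero k] {x y : EuclideanSpace ℝ ι}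
    (hx : x ∈ unitCube ι) (hy : y ∈ unitCube ι)
    (hxy : (fun i ↦ gridIndex k (x i)) = fun i ↦ gridIndex k (y i)) :
    dist x y ≤ √(Fintype.card ι) / k := by
  simpa [div_eq_mul_inv] using dist_le_sqrt_card_mul_of_forall_abs_sub_le (by positivity)
    fun i ↦ abs_sub_le_of_gridIndex_eq (hx i) (hy i) (congrFun hxy i)

variable [Nonempty ι] {Y : Finset (EuclideanSpace ℝ ι)}

theorem IsOptimalQuantizer.infDist_le_of_mem_unitCube
    (hY : IsOptimalQuantizer volume (unitCube ι) Y) {k : ℕ} (hk : 0 < k)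
    (hcard : 2 * k ^ Fintype.card ι ≤ #Y) {x : EuclideanSpace ℝ ι} (hx : x ∈ unitCube ι) :
    infDist x Y ≤ 4 * √(Fintype.card ι) / k := by
  classical
  have : NeZero k := ⟨hk.ne'⟩
  refine hY.infDist_le_of_convex (c := fun x i ↦ gridIndex k (x i)) isCompact_unitCube
    convex_unitCube ?_ ?_ ?_ hk ?_ ?_ ?_ hx
  · simp [volume_unitCube]
  · exact Real.sqrt_pos.2 (Nat.cast_pos.2 Fintype.card_pos)
  · exact fun x hx y hy ↦ dist_le_sqrt_card_of_mem_unitCube hx hy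
  · simp
  · exact fun x hx y hy ↦ dist_le_of_forall_gridIndex_eq hx hy
  · simpa using hcard

theorem exists_nat_pos_le_and_le_two_mul {t : ℝ} (ht : 1 ≤ t) :
    ∃ k : ℕ, 0 < k ∧ k ≤ t ∧ t ≤ 2 * k := by
  have hk : 1 ≤ ⌊t⌋₊ := Nat.le_floor (by simpa using ht)
  refine ⟨⌊t⌋₊, hk, Nat.floor_le (by linarith), ?_⟩
  have : (1 : ℝ) ≤ ⌊t⌋₊ := Nat.one_le_cast.2 hk
  linarith [Nat.lt_floor_add_one t]

theorem stmt_5_general (hY : IsOptimalQuantizer volume (unitCube ι) Y) (hcard : 2 ≤ #Y)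
    {y : EuclideanSpace ℝ ι} (hy : y ∈ Y) :
    diam (voronoiCell (unitCube ι) Y y) ≤
      16 * √(Fintype.card ι) * (#Y / 2 : ℝ) ^ (-(1 : ℝ) / Fintype.card ι) := by
  set d := Fintype.card ι
  have hd : d ≠ 0 := Fintype.card_ne_zero
  have hn : (1 : ℝ) ≤ #Y / 2 := by
    rw [le_div_iff₀ two_pos, one_mul]
    exact_mod_cast hcard
  set t : ℝ := (#Y / 2 : ℝ) ^ (d : ℝ)⁻¹
  have ht : 1 ≤ t := Real.one_le_rpow hn (by positivity)
  have htd : t ^ d = #Y / 2 := Real.rpow_inv_natCast_pow (by positivity) hd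
  obtain ⟨k, hk, hkt, htk⟩ := exists_nat_pos_le_and_le_two_mul ht
  have hkcard : 2 * k ^ d ≤ #Y := by
    have hpow : (k : ℝ) ^ d ≤ #Y / 2 := htd ▸ pow_le_pow_left₀ k.cast_nonneg hkt d
    exact_mod_cast (by linarith : (2 * k ^ d : ℝ) ≤ #Y)
  calc diam (voronoiCell (unitCube ι) Y y) ≤ 2 * (4 * √d / k) :=
        diam_voronoiCell_le (by positivity)
          (fun x hx ↦ hY.infDist_le_of_mem_unitCube hk hkcard hx) hy
    _ = 16 * √d / (2 * k) := by field_simp; norm_num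
    _ ≤ 16 * √d / t := by gcongr
    _ = 16 * √d * (#Y / 2 : ℝ) ^ (-(1 : ℝ) / d) := by
        rw [neg_div, one_div, Real.rpow_neg (by positivity), div_eq_mul_inv]

end UnitCube

theorem IsMinimizer.isOptimalQuantizer {n : ℕ} {Y : Finset E3} (hY : IsMinimizer n Y) :
    IsOptimalQuantizer volume (unitCube (Fin 3)) Y :=
  ⟨hY.1, fun Z hZ hcard ↦ hY.2.2 Z hZ (hcard.trans hY.2.1)⟩

theorem ten_le_sqrt_sub_one_rpow :
    10 ≤ (√(1 + (2 ^ 4 * 3 ^ 3 : ℝ) / (5 ^ 2 * 10 ^ 3)) - 1) ^ (-(1 : ℝ) / 2) := by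
  have hpos : 1 < √(1 + (2 ^ 4 * 3 ^ 3 : ℝ) / (5 ^ 2 * 10 ^ 3)) :=
    Real.lt_sqrt_of_sq_lt (by norm_num)
  have hle : √(1 + (2 ^ 4 * 3 ^ 3 : ℝ) / (5 ^ 2 * 10 ^ 3)) ≤ 1 + 10 ^ (-2 : ℝ) :=
    Real.sqrt_le_iff.2 ⟨by positivity, by norm_num [Real.rpow_neg]⟩
  calc (10 : ℝ) = (10 ^ (-2 : ℝ)) ^ (-(1 : ℝ) / 2) := by
        rw [← Real.rpow_mul (by norm_num)]; norm_num
    _ ≤ _ := Real.rpow_le_rpow_of_nonpos (by linarith) (by linarith) (by norm_num)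

theorem omega3_pos : 0 < omega3 := by
  unfold omega3
  positivity

theorem pi_rpow_mul_omega3_rpow_le_four :
    Real.pi ^ ((1 : ℝ) / 4) * omega3 ^ ((1 : ℝ) / 12) ≤ 4 := by
  have hpi : Real.pi ^ ((1 : ℝ) / 4) ≤ 2 := by
    rw [one_div, Real.rpow_inv_le_iff_of_pos Real.pi_pos.le (by norm_num) (by norm_num)]
    norm_num
    linarith [Real.pi_lt_four]
  have hω : omega3 ^ ((1 : ℝ) / 12) ≤ 2 := by
    rw [one_div, Real.rpow_inv_le_iff_of_pos omega3_pos.le (by norm_num) (by norm_num)]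
    norm_num [omega3]
    linarith [Real.pi_lt_four]
  calc Real.pi ^ ((1 : ℝ) / 4) * omega3 ^ ((1 : ℝ) / 12) ≤ 2 * 2 :=
        mul_le_mul hpi hω (Real.rpow_nonneg omega3_pos.le _) two_pos.le
    _ = 4 := by norm_num

theorem sixteen_mul_sqrt_three_mul_two_rpow_le_Gamma4 :
    16 * √3 * 2 ^ ((1 : ℝ) / 3) ≤ Gamma4 := by
  have h12 : (1 : ℝ) ≤ 12 ^ ((1 : ℝ) / 4) := Real.one_le_rpow (by norm_num) (by norm_num)
  have h16 : (16 : ℝ) ^ ((1 : ℝ) / 3) = 2 * 2 ^ ((1 : ℝ) / 3) := by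
    rw [show (16 : ℝ) = 2 ^ (4 : ℝ) by norm_num, ← Real.rpow_mul (by norm_num),
      ← Real.rpow_one_add' (by norm_num) (by norm_num)]
    norm_num
  have h81 : 3 ≤ ((5 ^ 2 * 10 ^ 3 : ℝ) / (2 ^ 2 * 3 ^ 3)) ^ ((1 : ℝ) / 4) := by
    rw [one_div, Real.le_rpow_inv_iff_of_pos (by norm_num) (by norm_num) (by norm_num)]
    norm_num
  have hω := omega3_pos
  have hsqrt : √3 ≤ 15 / 8 := Real.sqrt_le_iff.2 ⟨by norm_num, by norm_num⟩
  calc 16 * √3 * 2 ^ ((1 : ℝ) / 3) ≤ 16 * (15 / 8) * 2 ^ ((1 : ℝ) / 3) := by gcongr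
    _ = 2 * 1 * (2 * 2 ^ ((1 : ℝ) / 3)) / 4 * 10 * 3 := by ring
    _ ≤ Gamma4 := by
        unfold Gamma4
        rw [h16]
        have hten := ten_le_sqrt_sub_one_rpow
        refine mul_le_mul (mul_le_mul ?_ hten (by norm_num) (by positivity)) h81 (by norm_num)
          (mul_nonneg (by positivity) (by linarith))
        gcongr
        exact pi_rpow_mul_omega3_rpow_le_four

theorem sixteen_mul_sqrt_three_mul_rpow_le_Gamma4_mul_rpow {a : ℝ} (ha : 2 < a) :
    16 * √3 * (a / 2) ^ (-(1 : ℝ) / 3) ≤ Gamma4 * (a - 2) ^ (-(1 : ℝ) / 3) := by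
  have ha2 : 0 < a - 2 := sub_pos.2 ha
  calc 16 * √3 * (a / 2) ^ (-(1 : ℝ) / 3)
      ≤ 16 * √3 * ((a - 2) / 2) ^ (-(1 : ℝ) / 3) := by
        gcongr 16 * √3 * ?_
        exact Real.rpow_le_rpow_of_nonpos (by positivity) (by linarith) (by norm_num)
    _ = 16 * √3 * 2 ^ ((1 : ℝ) / 3) * (a - 2) ^ (-(1 : ℝ) / 3) := by
        rw [Real.div_rpow ha2.le two_pos.le, neg_div, Real.rpow_neg two_pos.le, div_inv_eq_mul]
        ring
    _ ≤ Gamma4 * (a - 2) ^ (-(1 : ℝ) / 3) := by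
        gcongr
        exact sixteen_mul_sqrt_three_mul_two_rpow_le_Gamma4

theorem stmt_5 (n : ℕ) (hn : 3 ≤ n) (Y : Finset E3) (hY : IsMinimizer n Y)
    (y : E3) (hyY : y ∈ Y) :
    Metric.diam (vorCell Y y) ≤ Gamma4 * ((n : ℝ) - 2) ^ (-(1 : ℝ) / 3) := by
  have hdiam := stmt_5_general hY.isOptimalQuantizer (hY.2.1 ▸ by lia) hyY
  rw [hY.2.1, Fintype.card_fin] at hdiam
  exact hdiam.trans (sixteen_mul_sqrt_three_mul_rpow_le_Gamma4_mul_rpow (by exact_mod_cast hn))
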